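/- Let a ∈ 𝔻, f₀ ∈ 𝒮^∞, let c₀, c₁, λ ∈ ℂ with |c₀| = |c₁| = |λ| = 1, let b ∈ 𝔻, and set ρ(z) = λ·(z − b)/(conj(b)·z − 1) for z ∈ 𝔻. Then the map T defined by T(f)(z) = f₀(z) + c₀·f(a) + ∫_{[a,z]} c₁·conj(f'(conj(ρ(ζ)))) dζ maps 𝒮^∞ into 𝒮^∞ and is a surjective isometry of 𝒮^∞ with respect to the norm ‖·‖_σ. -/

import Mathlib

open Complex Metric Set

/-- `f` belongs to `𝒮^∞`: `f` is analytic on the open unit disc `𝔻` and its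
derivative is bounded on `𝔻`. -/
def MemSInf (f : ℂ → ℂ) : Prop :=
  DifferentiableOn ℂ f (ball (0 : ℂ) 1) ∧
    ∃ M : ℝ, ∀ z ∈ ball (0 : ℂ) 1, ‖deriv f z‖ ≤ M

/-- The norm `‖f‖_σ = |f(a)| + sup_{w ∈ 𝔻} |f'(w)|`. -/
noncomputable def normSigmaA (a : ℂ) (f : ℂ → ℂ) : ℝ :=
  ‖f a‖ + ⨆ w : ball (0 : ℂ) 1, ‖deriv f (w : ℂ)‖

/-- The line integral `∫_{[a,z]} g(ζ) dζ = ∫₀¹ g(a + t(z − a))·(z − a) dt`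
along the straight segment from `a` to `z`. -/
noncomputable def lineInt (g : ℂ → ℂ) (a z : ℂ) : ℂ :=
  ∫ t in (0:ℝ)..1, g (a + (t : ℂ) * (z - a)) * (z - a)

open scoped ComplexConjugate

lemma lineInt_eq_sub {F G : ℂ → ℂ} {a z : ℂ} (ha : a ∈ ball (0 : ℂ) 1) (hz : z ∈ ball (0 : ℂ) 1)
    (hF : ∀ w ∈ ball (0 : ℂ) 1, HasDerivAt F (G w) w) (hG : ContinuousOn G (ball (0 : ℂ) 1)) :
    lineInt G a z = F z - F a := by
  have hseg : ∀ t ∈ Icc (0 : ℝ) 1, a + (t : ℂ) * (z - a) ∈ ball (0 : ℂ) 1 := by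
    intro t ht
    have := (convex_ball (0 : ℂ) 1).add_smul_sub_mem ha hz ht
    simpa using this
  have h := intervalIntegral.integral_eq_sub_of_hasDerivAt (a := (0 : ℝ)) (b := 1)
    (f := fun t : ℝ => F (a + (t : ℂ) * (z - a)))
    (f' := fun t : ℝ => G (a + (t : ℂ) * (z - a)) * (z - a)) ?_ ?_
  · unfold lineInt
    rw [h]
    simp
  · intro t ht
    rw [uIcc_of_le zero_le_one] at ht
    have h1 : HasDerivAt (fun t : ℝ => a + (t : ℂ) * (z - a)) (z - a) t := by
      simpa using ((Complex.ofRealCLM.hasDerivAt (x := t)).mul_const (z - a)).const_add a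
    exact (hF _ (hseg t ht)).comp t h1
  · apply ContinuousOn.intervalIntegrable
    rw [uIcc_of_le zero_le_one]
    refine ContinuousOn.mul ?_ continuousOn_const
    exact hG.comp (by fun_prop) hseg

lemma mob_den_ne {b z : ℂ} (hb : ‖b‖ < 1) (hz : ‖z‖ < 1) : conj b * z - 1 ≠ 0 := by
  intro h
  have h1 : conj b * z = 1 := sub_eq_zero.mp h
  have h2 : ‖b‖ * ‖z‖ = 1 := by
    have := congrArg norm h1
    simpa using this
  nlinarith [norm_nonneg b, norm_nonneg z]

lemma mob_norm_lt {b z : ℂ} (hb : ‖b‖ < 1) (hz : ‖z‖ < 1) :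
    ‖(z - b) / (conj b * z - 1)‖ < 1 := by
  have hd : 0 < ‖conj b * z - 1‖ := norm_pos_iff.mpr (mob_den_ne hb hz)
  rw [norm_div, div_lt_one hd]
  refine lt_of_pow_lt_pow_left₀ 2 hd.le ?_
  have e1 : ‖b‖ ^ 2 < 1 := by nlinarith [norm_nonneg b]
  have e2 : ‖z‖ ^ 2 < 1 := by nlinarith [norm_nonneg z]
  rw [Complex.sq_norm, Complex.normSq_apply] at e1 e2
  rw [Complex.sq_norm, Complex.sq_norm, Complex.normSq_apply, Complex.normSq_apply]
  simp only [Complex.sub_re, Complex.sub_im, Complex.mul_re, Complex.mul_im, Complex.conj_re,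
    Complex.conj_im, Complex.one_re, Complex.one_im]
  nlinarith [mul_pos (sub_pos.mpr e1) (sub_pos.mpr e2)]

lemma mob_invol {b z : ℂ} (hb : ‖b‖ < 1) (hz : ‖z‖ < 1) :
    ((z - b) / (conj b * z - 1) - b) / (conj b * ((z - b) / (conj b * z - 1)) - 1) = z := by
  have hd := mob_den_ne hb hz
  have hd' := mob_den_ne hb (mob_norm_lt hb hz)
  rw [div_eq_iff hd']
  have hq := div_mul_cancel₀ (z - b) hd
  linear_combination (-1) * hq

lemma deriv_lineInt_form {G : ℂ → ℂ} {a : ℂ} (ha : a ∈ ball (0 : ℂ) 1)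
    (hG : DifferentiableOn ℂ G (ball (0 : ℂ) 1)) {z : ℂ} (hz : z ∈ ball (0 : ℂ) 1) :
    HasDerivAt (fun z => lineInt G a z) (G z) z := by
  obtain ⟨F, hF⟩ := hG.isExactOn_ball
  have h1 : HasDerivAt (fun z => F z - F a) (G z) z := (hF z hz).sub_const _
  refine h1.congr_of_eventuallyEq ?_
  filter_upwards [isOpen_ball.mem_nhds hz] with w hw
  exact lineInt_eq_sub ha hw hF hG.continuousOn

lemma lineInt_self (G : ℂ → ℂ) (a : ℂ) : lineInt G a a = 0 := by simp [lineInt]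

lemma diff_at {f : ℂ → ℂ} (hf : DifferentiableOn ℂ f (ball (0 : ℂ) 1)) {z : ℂ}
    (hz : z ∈ ball (0 : ℂ) 1) : DifferentiableAt ℂ f z :=
  hf.differentiableAt (isOpen_ball.mem_nhds hz)

theorem conj_integral_form_is_surjective_isometry_normSigmaA
    (a : ℂ) (ha : a ∈ ball (0 : ℂ) 1)
    (f₀ : ℂ → ℂ) (hf₀ : MemSInf f₀)
    (c₀ c₁ lam : ℂ) (hc₀ : ‖c₀‖ = 1) (hc₁ : ‖c₁‖ = 1) (hlam : ‖lam‖ = 1)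
    (b : ℂ) (hb : b ∈ ball (0 : ℂ) 1)
    (ρ : ℂ → ℂ) (hρ : ∀ z, ρ z = lam * (z - b) / ((starRingEnd ℂ) b * z - 1))
    (T : (ℂ → ℂ) → (ℂ → ℂ))
    (hT : ∀ f z, T f z = f₀ z + c₀ * f a + lineInt (fun ζ => c₁ * (starRingEnd ℂ) (deriv f ((starRingEnd ℂ) (ρ ζ)))) a z) :
    (∀ f, MemSInf f → MemSInf (T f)) ∧
    (∀ g, MemSInf g → ∃ f, MemSInf f ∧ Set.EqOn (T f) g (ball (0 : ℂ) 1)) ∧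
    (∀ f g, MemSInf f → MemSInf g →
      normSigmaA a (T f - T g) = normSigmaA a (f - g)) := by
  have hb' : ‖b‖ < 1 := by simpa using hb
  have hlam0 : lam ≠ 0 := by intro h; simp [h] at hlam
  have hc₀0 : c₀ ≠ 0 := by intro h; simp [h] at hc₀
  have hc₁0 : c₁ ≠ 0 := by intro h; simp [h] at hc₁
  have hρ' : ∀ z, ρ z = lam * ((z - b) / (conj b * z - 1)) := by
    intro z; rw [hρ, mul_div_assoc]
  have hρmem : ∀ z ∈ ball (0 : ℂ) 1, ρ z ∈ ball (0 : ℂ) 1 := by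
    intro z hz
    have := mob_norm_lt hb' (z := z) (by simpa using hz)
    rw [mem_ball_zero_iff, hρ', norm_mul, hlam, one_mul]
    exact this
  have hcmem : ∀ z ∈ ball (0 : ℂ) 1, conj z ∈ ball (0 : ℂ) 1 := by
    intro z hz
    rw [mem_ball_zero_iff] at *
    simpa using hz
  have hρdiff : DifferentiableOn ℂ ρ (ball (0 : ℂ) 1) := by
    have : ρ = fun z => lam * (z - b) / (conj b * z - 1) := funext hρ
    rw [this]
    refine DifferentiableOn.div (by fun_prop) (by fun_prop) ?_
    intro z hz
    exact mob_den_ne hb' (by simpa using hz)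
  -- the inverse of ρ
  obtain ⟨σ, hσ⟩ : ∃ σ : ℂ → ℂ, ∀ w, σ w = (w / lam - b) / (conj b * (w / lam) - 1) :=
    ⟨_, fun _ => rfl⟩
  have hdivlt : ∀ w ∈ ball (0 : ℂ) 1, ‖w / lam‖ < 1 := by
    intro w hw
    rw [norm_div, hlam, div_one]
    simpa using hw
  have hσmem : ∀ w ∈ ball (0 : ℂ) 1, σ w ∈ ball (0 : ℂ) 1 := by
    intro w hw
    rw [mem_ball_zero_iff, hσ]
    exact mob_norm_lt hb' (hdivlt w hw)
  have hσdiff : DifferentiableOn ℂ σ (ball (0 : ℂ) 1) := by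
    have : σ = fun w => (w / lam - b) / (conj b * (w / lam) - 1) := funext hσ
    rw [this]
    refine DifferentiableOn.div (by fun_prop) (by fun_prop) ?_
    intro z hz
    exact mob_den_ne hb' (hdivlt z hz)
  have hρσ : ∀ w ∈ ball (0 : ℂ) 1, ρ (σ w) = w := by
    intro w hw
    rw [hρ', hσ, mob_invol hb' (hdivlt w hw)]
    field_simp
  have hσρ : ∀ z ∈ ball (0 : ℂ) 1, σ (ρ z) = z := by
    intro z hz
    rw [hσ, hρ', mul_div_cancel_left₀ _ hlam0]
    exact mob_invol hb' (by simpa using hz)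
  have hKdiff : ∀ f, MemSInf f → DifferentiableOn ℂ
      (fun ζ => c₁ * conj (deriv f (conj (ρ ζ)))) (ball (0 : ℂ) 1) := by
    intro f hf z hz
    have h1 : DifferentiableOn ℂ (deriv f) (ball (0 : ℂ) 1) := hf.1.deriv isOpen_ball
    have h2 : DifferentiableAt ℂ (conj ∘ deriv f ∘ conj) (ρ z) := by
      have := (diff_at h1 (hcmem _ (hρmem z hz))).conj_conj
      rwa [Complex.conj_conj] at this
    have h3 := (h2.comp z (diff_at hρdiff hz)).const_mul c₁
    exact h3.differentiableWithinAt
  have hTd : ∀ f, MemSInf f → ∀ z ∈ ball (0 : ℂ) 1,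
      HasDerivAt (T f) (deriv f₀ z + c₁ * conj (deriv f (conj (ρ z)))) z := by
    intro f hf z hz
    have : T f = fun z => f₀ z + c₀ * f a +
        lineInt (fun ζ => c₁ * conj (deriv f (conj (ρ ζ)))) a z := funext (hT f)
    rw [this]
    exact ((diff_at hf₀.1 hz).hasDerivAt.add_const _).add
      (deriv_lineInt_form ha (hKdiff f hf) hz)
  refine ⟨?_, ?_, ?_⟩
  · intro f hf
    refine ⟨fun z hz => (hTd f hf z hz).differentiableAt.differentiableWithinAt, ?_⟩
    obtain ⟨M₀, hM₀⟩ := hf₀.2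
    obtain ⟨M, hM⟩ := hf.2
    refine ⟨M₀ + M, fun z hz => ?_⟩
    rw [(hTd f hf z hz).deriv]
    refine (norm_add_le _ _).trans (add_le_add (hM₀ z hz) ?_)
    rw [norm_mul, hc₁, one_mul, Complex.norm_conj]
    exact hM _ (hcmem _ (hρmem z hz))
  · intro g hg
    obtain ⟨h, hh⟩ : ∃ h : ℂ → ℂ, ∀ z, h z = (deriv g (σ z) - deriv f₀ (σ z)) / c₁ :=
      ⟨_, fun _ => rfl⟩
    have hhdiff : DifferentiableOn ℂ h (ball (0 : ℂ) 1) := by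
      have : h = fun z => (deriv g (σ z) - deriv f₀ (σ z)) / c₁ := funext hh
      rw [this]
      exact (((hg.1.deriv isOpen_ball).comp hσdiff hσmem).sub
        ((hf₀.1.deriv isOpen_ball).comp hσdiff hσmem)).div_const c₁
    have hkdiff : DifferentiableOn ℂ (conj ∘ h ∘ conj) (ball (0 : ℂ) 1) := by
      intro z hz
      have := (diff_at hhdiff (hcmem z hz)).conj_conj
      rw [Complex.conj_conj] at this
      exact this.differentiableWithinAt
    obtain ⟨F, hF⟩ := hkdiff.isExactOn_ball
    have hf : ∀ z ∈ ball (0 : ℂ) 1, HasDerivAt (fun z => F z - F a + (g a - f₀ a) / c₀)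
        ((conj ∘ h ∘ conj) z) z := fun z hz => ((hF z hz).sub_const _).add_const _
    have hmem : MemSInf (fun z => F z - F a + (g a - f₀ a) / c₀) := by
      refine ⟨fun z hz => (hf z hz).differentiableAt.differentiableWithinAt, ?_⟩
      obtain ⟨M₀, hM₀⟩ := hf₀.2
      obtain ⟨M, hM⟩ := hg.2
      refine ⟨M + M₀, fun z hz => ?_⟩
      rw [(hf z hz).deriv]
      have hz' := hσmem _ (hcmem z hz)
      simp only [Function.comp_apply, Complex.norm_conj, hh, norm_div, hc₁, div_one]
      exact (norm_sub_le _ _).trans (add_le_add (hM _ hz') (hM₀ _ hz'))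
    refine ⟨_, hmem, fun z hz => ?_⟩
    rw [hT]
    rw [lineInt_eq_sub (F := fun z => g z - f₀ z) ha hz ?_ (hKdiff _ hmem).continuousOn]
    · field_simp
      ring
    · intro w hw
      have h1 := (diff_at hg.1 hw).hasDerivAt.sub (diff_at hf₀.1 hw).hasDerivAt
      have h2 : c₁ * conj (deriv (fun z => F z - F a + (g a - f₀ a) / c₀) (conj (ρ w)))
          = deriv g w - deriv f₀ w := by
        rw [(hf _ (hcmem _ (hρmem w hw))).deriv]
        simp only [Function.comp_apply, Complex.conj_conj, hh, hσρ w hw]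
        field_simp
      rw [h2]
      exact h1
  · intro f g hf hg
    unfold normSigmaA
    congr 1
    · simp only [Pi.sub_apply, hT, lineInt_self]
      have : f₀ a + c₀ * f a + 0 - (f₀ a + c₀ * g a + 0) = c₀ * (f a - g a) := by ring
      rw [this, norm_mul, hc₀, one_mul]
    · have hsurj : Function.Surjective (fun w : ball (0 : ℂ) 1 =>
          (⟨conj (ρ w), hcmem _ (hρmem w w.2)⟩ : ball (0 : ℂ) 1)) := by
        rintro ⟨w, hw⟩
        refine ⟨⟨σ (conj w), hσmem _ (hcmem w hw)⟩, ?_⟩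
        simp [hρσ _ (hcmem w hw)]
      rw [← hsurj.iSup_comp (fun w : ball (0 : ℂ) 1 => ‖deriv (f - g) (w : ℂ)‖)]
      congr 1
      funext w
      have hw' := hcmem _ (hρmem w w.2)
      rw [((hTd f hf w w.2).sub (hTd g hg w w.2)).deriv]
      rw [((diff_at hf.1 hw').hasDerivAt.sub (diff_at hg.1 hw').hasDerivAt).deriv]
      rw [add_sub_add_left_eq_sub, ← mul_sub, ← map_sub, norm_mul, hc₁, one_mul,
        Complex.norm_conj]
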